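/- There exist a setting (namely 5 agents and 5 objects, each object of capacity 1) and a type profile t at which ABM(t) strictly rank dominates NBM(t). -/

import Mathlib

/-!
Name the objects `a, b, c, d, e = 0, 1, 2, 3, 4`, and let two agents have the ranking
`a ≻ b ≻ c ≻ d ≻ e` and the other three the ranking `b ≻ d ≻ c ≻ e ≻ a`.

Under either mechanism, the first round gives `a` to one agent of the first kind and `b` to one of
the second kind, and the second round gives `d` to a further agent of the second kind.  Let `x`
be the remaining agent of the first kind and `y` that of the second.

* In the adaptive mechanism, `x` skips the exhausted object `b` and takes its third choice `c` in
  the second round, so that `y` gets its fourth choice `e`.  Whatever the priorities, the ranks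
  received are `1, 1, 2, 3, 4`.
* In the naïve mechanism, `x` wastes the second round on `b` and competes with `y` for `c` in the
  third.  If `x` wins, then the ranks are again `1, 1, 2, 3, 4`.  If `y` wins, then it receives its
  third choice, while `x` is left with its last choice `e`: the ranks are `1, 1, 2, 3, 5`.

So the adaptive mechanism is weakly better for every priority ordering, and strictly better for
some.  The cumulated rank distribution of the averaged mechanism is the average of the number of
agents that receive one of their best choices (`sum_rankDist_average`).  Hence it suffices to
compare these numbers for each priority ordering (`numTop_nbm_le_numTop_abm`) and to exhibit one
ordering with a strict inequality (`numTop_nbm_lt_numTop_abm`).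
-/

open Finset

/-- A preference type (strict ranking of the `m` objects): `t k` is the object
ranked `k`-th (0-indexed).  Object `a` is preferred to `b` iff
`t.symm a < t.symm b`. -/
abbrev Pref (m : ℕ) := Fin m ≃ Fin m

/-- One round of a Boston-style mechanism: the agents in `order` (highest priority
first) that are not yet assigned apply to `choice i`; an applicant receives a copy
iff the remaining capacity of its chosen object is still positive. -/
def applyRound {n m : ℕ} (choice : Fin n → Option (Fin m)) (order : List (Fin n))
    (st : (Fin n → Option (Fin m)) × (Fin m → ℕ)) :
    (Fin n → Option (Fin m)) × (Fin m → ℕ) :=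
  order.foldl
    (fun s i =>
      match s.1 i with
      | some _ => s
      | none =>
        match choice i with
        | none => s
        | some j =>
          if 0 < s.2 j then
            (Function.update s.1 i (some j), Function.update s.2 j (s.2 j - 1))
          else s)
    st

/-- The list of agents in order of priority under `π` (the agent with `π i = 0` first). -/
def priorityList {n : ℕ} (π : Equiv.Perm (Fin n)) : List (Fin n) :=
  (List.finRange n).map π.symm

/-- The most preferred object (under `ti`) among the objects with positive
remaining capacity, if any such object exists. -/
def favorite {m : ℕ} (ti : Pref m) (cap : Fin m → ℕ) : Option (Fin m) :=
  ((List.finRange m).find? (fun k => decide (0 < cap (ti k)))).map ti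

/-- The naïve Boston mechanism for a fixed priority ordering `π`: in round `k`
every not-yet-assigned agent applies to its `k`-th ranked object. -/
def NBMassign {n m : ℕ} (q : Fin m → ℕ) (t : Fin n → Pref m) (π : Equiv.Perm (Fin n)) :
    Fin n → Option (Fin m) :=
  ((List.finRange m).foldl
    (fun st k => applyRound (fun i => some (t i k)) (priorityList π) st)
    ((fun _ => none), q)).1

/-- The adaptive Boston mechanism for a fixed priority ordering `π`: in every round
each not-yet-assigned agent applies to its most preferred object among the objects
with strictly positive remaining capacity (at the beginning of the round). -/
def ABMassign {n m : ℕ} (q : Fin m → ℕ) (t : Fin n → Pref m) (π : Equiv.Perm (Fin n)) :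
    Fin n → Option (Fin m) :=
  ((fun st => applyRound (fun i => favorite (t i) st.2) (priorityList π) st)^[n]
    ((fun _ => none), q)).1

/-- The serial dictatorship for a fixed priority ordering `π`: agents are processed
in order of priority, each receiving one copy of its most preferred object among
those with remaining capacity. -/
def SDassign {n m : ℕ} (q : Fin m → ℕ) (t : Fin n → Pref m) (π : Equiv.Perm (Fin n)) :
    Fin n → Option (Fin m) :=
  ((priorityList π).foldl
    (fun s i =>
      match favorite (t i) s.2 with
      | none => s
      | some j => (Function.update s.1 i (some j), Function.update s.2 j (s.2 j - 1)))
    ((fun _ => none), q)).1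

/-- The (deterministic) allocation matrix induced by an assignment of objects to agents. -/
def detAlloc {n m : ℕ} (a : Fin n → Option (Fin m)) : Fin n → Fin m → ℝ :=
  fun i j => if a i = some j then 1 else 0

/-- The naïve Boston mechanism: the average of `NBMassign` over all `n!` priority orderings. -/
noncomputable def NBM {n m : ℕ} (q : Fin m → ℕ) (t : Fin n → Pref m) : Fin n → Fin m → ℝ :=
  fun i j => (∑ π : Equiv.Perm (Fin n), detAlloc (NBMassign q t π) i j) / (Nat.factorial n)

/-- The adaptive Boston mechanism: the average of `ABMassign` over all `n!` priority orderings. -/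
noncomputable def ABM {n m : ℕ} (q : Fin m → ℕ) (t : Fin n → Pref m) : Fin n → Fin m → ℝ :=
  fun i j => (∑ π : Equiv.Perm (Fin n), detAlloc (ABMassign q t π) i j) / (Nat.factorial n)

/-- Random serial dictatorship: the average of `SDassign` over all `n!` priority orderings. -/
noncomputable def RSD {n m : ℕ} (q : Fin m → ℕ) (t : Fin n → Pref m) : Fin n → Fin m → ℝ :=
  fun i j => (∑ π : Equiv.Perm (Fin n), detAlloc (SDassign q t π) i j) / (Nat.factorial n)

/-- `x` is an allocation for capacities `q`. -/
def IsAlloc {n m : ℕ} (q : Fin m → ℕ) (x : Fin n → Fin m → ℝ) : Prop :=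
  (∀ i j, 0 ≤ x i j ∧ x i j ≤ 1) ∧ (∀ i, ∑ j, x i j = 1) ∧ ∀ j, ∑ i, x i j ≤ q j

/-- First-order stochastic dominance of `v` over `w` with respect to the ranking `ti`. -/
def FOSD {m : ℕ} (ti : Pref m) (v w : Fin m → ℝ) : Prop :=
  ∀ K : Fin m, ∑ k ∈ Finset.Iic K, w (ti k) ≤ ∑ k ∈ Finset.Iic K, v (ti k)

/-- Strict first-order stochastic dominance. -/
def StrictFOSD {m : ℕ} (ti : Pref m) (v w : Fin m → ℝ) : Prop :=
  FOSD ti v w ∧ ∃ K : Fin m, ∑ k ∈ Finset.Iic K, w (ti k) < ∑ k ∈ Finset.Iic K, v (ti k)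

/-- `x` ordinally dominates `y` at type profile `t`. -/
def OrdDom {n m : ℕ} (t : Fin n → Pref m) (x y : Fin n → Fin m → ℝ) : Prop :=
  ∀ i, FOSD (t i) (x i) (y i)

/-- `x` strictly ordinally dominates `y` at type profile `t`. -/
def StrictOrdDom {n m : ℕ} (t : Fin n → Pref m) (x y : Fin n → Fin m → ℝ) : Prop :=
  OrdDom t x y ∧ ∃ i : Fin n, ∃ K : Fin m,
    ∑ k ∈ Finset.Iic K, y i (t i k) < ∑ k ∈ Finset.Iic K, x i (t i k)

/-- The rank distribution of allocation `x` at profile `t`: `rankDist t x k` is the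
expected number of `k`-th (0-indexed) choices allocated. -/
noncomputable def rankDist {n m : ℕ} (t : Fin n → Pref m) (x : Fin n → Fin m → ℝ)
    (k : Fin m) : ℝ :=
  ∑ i, x i (t i k)

/-- `x` weakly rank dominates `y` at profile `t`. -/
def WeakRankDom {n m : ℕ} (t : Fin n → Pref m) (x y : Fin n → Fin m → ℝ) : Prop :=
  ∀ K : Fin m, ∑ k ∈ Finset.Iic K, rankDist t y k ≤ ∑ k ∈ Finset.Iic K, rankDist t x k

/-- `x` strictly rank dominates `y` at profile `t`. -/
def StrictRankDom {n m : ℕ} (t : Fin n → Pref m) (x y : Fin n → Fin m → ℝ) : Prop :=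
  WeakRankDom t x y ∧ ∃ K : Fin m,
    ∑ k ∈ Finset.Iic K, rankDist t y k < ∑ k ∈ Finset.Iic K, rankDist t x k

/-- Feasibility of a deterministic (total) assignment. -/
def Feasible {n m : ℕ} (q : Fin m → ℕ) (y : Fin n → Fin m) : Prop :=
  ∀ j, (Finset.univ.filter fun i => y i = j).card ≤ q j

/-- Ex-post efficiency at `t` of a deterministic assignment `a`: no feasible
deterministic assignment makes every agent weakly better off and some agent
strictly better off. -/
def ExPostEfficientAt {n m : ℕ} (q : Fin m → ℕ) (t : Fin n → Pref m)
    (a : Fin n → Option (Fin m)) : Prop :=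
  ¬ ∃ y : Fin n → Fin m, Feasible q y ∧
      (∀ i j, a i = some j → (t i).symm (y i) ≤ (t i).symm j) ∧
      ∃ i j, a i = some j ∧ (t i).symm (y i) < (t i).symm j

/-- The expected number of allocated first choices under `x` at profile `t`. -/
noncomputable def d1 {n m : ℕ} (t : Fin n → Pref m) (x : Fin n → Fin m → ℝ) : ℝ :=
  ∑ i, ∑ j, if ((t i).symm j : ℕ) = 0 then x i j else 0

/-- `x` is first-choice-maximizing at profile `t`. -/
def FirstChoiceMax {n m : ℕ} (q : Fin m → ℕ) (t : Fin n → Pref m)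
    (x : Fin n → Fin m → ℝ) : Prop :=
  IsAlloc q x ∧ ∀ y : Fin n → Fin m → ℝ, IsAlloc q y → d1 t y ≤ d1 t x

/-- `u` is a vNM utility function consistent with the ranking `ti`. -/
def Consistent {m : ℕ} (ti : Pref m) (u : Fin m → ℝ) : Prop :=
  ∀ a b : Fin m, ti.symm a < ti.symm b → u b < u a

/-- Uniformly relatively bounded indifference with bound `r`. -/
def URBI {m : ℕ} (r : ℝ) (u : Fin m → ℝ) : Prop :=
  ∀ a b : Fin m, u b < u a → u b - (⨅ j, u j) ≤ r * (u a - (⨅ j, u j))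

/-- The number of agents that receive one of their `K + 1` most preferred objects under the
deterministic assignment `a` (ranks are 0-indexed). -/
def numTop {n m : ℕ} (t : Fin n → Pref m) (a : Fin n → Option (Fin m)) (K : Fin m) : ℕ :=
  ∑ k ∈ Finset.Iic K, ∑ i, if a i = some (t i k) then 1 else 0

/-- Averaging over priority orderings commutes with cumulating the rank distribution. -/
lemma sum_rankDist_average {n m : ℕ} (t : Fin n → Pref m)
    (a : Equiv.Perm (Fin n) → Fin n → Option (Fin m)) (K : Fin m) :
    ∑ k ∈ Finset.Iic K, rankDist t
        (fun i j => (∑ π, detAlloc (a π) i j) / (Nat.factorial n)) k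
      = (∑ π, (numTop t (a π) K : ℝ)) / (Nat.factorial n) := by
  simp only [rankDist, numTop, detAlloc, ← Finset.sum_div]
  congr 1
  push_cast
  rw [Finset.sum_comm]
  simp_rw [Finset.sum_comm (s := (Finset.univ : Finset (Equiv.Perm (Fin n))))]
  exact Finset.sum_comm

/-- The ranking `b ≻ d ≻ c ≻ e ≻ a`. -/
def rankingB : Pref 5 where
  toFun := ![1, 3, 2, 4, 0]
  invFun := ![4, 0, 2, 1, 3]
  left_inv := by decide
  right_inv := by decide

/-- Agents `0, 1` rank `a ≻ b ≻ c ≻ d ≻ e`, and agents `2, 3, 4` rank `b ≻ d ≻ c ≻ e ≻ a`. -/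
def profile : Fin 5 → Pref 5 :=
  ![Equiv.refl _, Equiv.refl _, rankingB, rankingB, rankingB]

/-- For every priority ordering, the adaptive mechanism serves at least as many agents with
one of their best choices as the naïve one. -/
lemma numTop_nbm_le_numTop_abm : ∀ (π : Equiv.Perm (Fin 5)) (K : Fin 5),
    numTop profile (NBMassign (fun _ => 1) profile π) K
      ≤ numTop profile (ABMassign (fun _ => 1) profile π) K := by
  decide +kernel

/-- With priorities `4, 3, 2, 1, 0`, agent `2` obtains `c` ahead of agent `0` in the naïve
mechanism, and only four agents receive one of their four best choices. -/
lemma numTop_nbm_lt_numTop_abm :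
    numTop profile (NBMassign (fun _ => 1) profile Fin.revPerm) 3
      < numTop profile (ABMassign (fun _ => 1) profile Fin.revPerm) 3 := by
  decide +kernel

/-- in the setting with 5 agents and 5 objects of unit capacity there
is a type profile at which `ABM(t)` strictly rank dominates `NBM(t)`. -/
theorem abm_strictly_rank_dominates_nbm_somewhere :
    ∃ t : Fin 5 → Pref 5,
      StrictRankDom t (ABM (fun _ => 1) t) (NBM (fun _ => 1) t) := by
  refine ⟨profile, fun K => ?_, 3, ?_⟩
  · unfold NBM ABM
    rw [sum_rankDist_average, sum_rankDist_average]
    gcongr with π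
    exact numTop_nbm_le_numTop_abm π K
  · unfold NBM ABM
    rw [sum_rankDist_average, sum_rankDist_average]
    refine div_lt_div_of_pos_right ?_ (by positivity)
    refine Finset.sum_lt_sum (fun π _ => ?_) ⟨Fin.revPerm, Finset.mem_univ _, ?_⟩
    · exact_mod_cast numTop_nbm_le_numTop_abm π 3
    · exact_mod_cast numTop_nbm_lt_numTop_abm
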